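/- Let (A, ⊛_{α,β}, Ω) be an Ω-relative anti-flexible algebra, and define x ⊚_{α,β} y := x ⊛_{α,β} y + y ⊛_{β,α} x and [x,y]_{α,β} := x ⊛_{α,β} y − y ⊛_{β,α} x. Then for all x, y, z ∈ A and α, β, γ ∈ Ω, the ⊚-associator satisfies (x ⊚_{α,β} y) ⊚_{αβ,γ} z − x ⊚_{α,βγ} (y ⊚_{β,γ} z) = [y, [x, z]_{α,γ}]_{β,αγ}. -/

import Mathlib

/-!
For an arbitrary biadditive product indexed by a commutative `Ω`, the associator of the
anticommutator differs from the double commutator `[y, [x, z]]` by the defects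
`(a, b, c) - (c, b, a)` of the original associator at the triples `(x, y, z)`, `(y, x, z)` and
`(x, z, y)`. Anti-flexibility says that each of these defects vanishes.
-/

/-- A family of biadditive products on `A` indexed by `Ω × Ω`; `m α β x y` is `x ⊛_{α,β} y`. -/
abbrev RelativeMul (Ω A : Type*) [AddCommMonoid A] := Ω → Ω → A →+ A →+ A

namespace RelativeMul

variable {Ω A : Type*} [AddCommGroup A]

/-- The anticommutator family `x ⊚_{α,β} y = x ⊛_{α,β} y + y ⊛_{β,α} x`, again biadditive. The
indices are exchanged together with the arguments. -/
def anticommutator (m : RelativeMul Ω A) : RelativeMul Ω A :=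
  fun α β ↦ m α β + (m β α).flip

/-- The commutator family `[x, y]_{α,β} = x ⊛_{α,β} y - y ⊛_{β,α} x`, again biadditive. The
indices are exchanged together with the arguments. -/
def commutator (m : RelativeMul Ω A) : RelativeMul Ω A :=
  fun α β ↦ m α β - (m β α).flip

/-- The associator of a relative product: `x`, `y`, `z` carry the indices `α`, `β`, `γ`, and a
product carries the product of the indices of its factors. -/
def associator [Mul Ω] (m : RelativeMul Ω A) (α β γ : Ω) (x y z : A) : A :=
  m (α * β) γ (m α β x y) z - m α (β * γ) x (m β γ y z)

/-- Anti-flexibility of a relative product: the associator is unchanged when its arguments, with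
their indices, are reversed. -/
def IsAntiFlexible [Mul Ω] (m : RelativeMul Ω A) : Prop :=
  ∀ (α β γ : Ω) (x y z : A), m.associator α β γ x y z = m.associator γ β α z y x

theorem anticommutator_apply (m : RelativeMul Ω A) (α β : Ω) (x y : A) :
    m.anticommutator α β x y = m α β x y + m β α y x :=
  rfl

theorem commutator_apply (m : RelativeMul Ω A) (α β : Ω) (x y : A) :
    m.commutator α β x y = m α β x y - m β α y x :=
  rfl

theorem associator_anticommutator [CommMagma Ω] (m : RelativeMul Ω A)
    (α β γ : Ω) (x y z : A) :
    m.anticommutator.associator α β γ x y z =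
      m.commutator β (α * γ) y (m.commutator α γ x z) +
        (m.associator α β γ x y z - m.associator γ β α z y x) +
        (m.associator β α γ y x z - m.associator γ α β z x y) +
        (m.associator α γ β x z y - m.associator β γ α y z x) := by
  simp only [associator, anticommutator_apply, commutator_apply, map_add, map_sub,
    AddMonoidHom.add_apply, mul_comm β α, mul_comm γ α, mul_comm γ β]
  abel

end RelativeMul

theorem relativeAntiFlexible_anticommutator_associator_general
    {Ω A : Type*} [CommMagma Ω] [AddCommGroup A] {m : RelativeMul Ω A} (hm : m.IsAntiFlexible)
    (α β γ : Ω) (x y z : A) :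
    m.anticommutator.associator α β γ x y z =
      m.commutator β (α * γ) y (m.commutator α γ x z) := by
  rw [m.associator_anticommutator, hm α β γ, hm β α γ, hm α γ β]
  simp only [sub_self, add_zero]

/-- on an Ω-relative anti-flexible algebra, the ⊚-associator of
`x ⊚_{α,β} y := x ⊛_{α,β} y + y ⊛_{β,α} x` equals `[y,[x,z]_{α,γ}]_{β,αγ}` for
the commutator bracket. -/
theorem relativeAntiFlexible_anticommutator_associator
    (k : Type*) [Field k] (Ω : Type*) [CommSemigroup Ω]
    (A : Type*) [AddCommGroup A] [Module k A]
    (mul : Ω → Ω → A →ₗ[k] A →ₗ[k] A)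
    (haf : ∀ (α β γ : Ω) (x y z : A),
      mul (α * β) γ (mul α β x y) z - mul α (β * γ) x (mul β γ y z) =
        mul (γ * β) α (mul γ β z y) x - mul γ (β * α) z (mul β α y x))
    (circ : Ω → Ω → A → A → A)
    (hcirc : ∀ (α β : Ω) (x y : A), circ α β x y = mul α β x y + mul β α y x)
    (br : Ω → Ω → A → A → A)
    (hbr : ∀ (α β : Ω) (x y : A), br α β x y = mul α β x y - mul β α y x) :
    ∀ (α β γ : Ω) (x y z : A),
      circ (α * β) γ (circ α β x y) z - circ α (β * γ) x (circ β γ y z) =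
        br β (α * γ) y (br α γ x z) := by
  let m : RelativeMul Ω A := fun α β ↦
    LinearMap.toAddMonoidHom'.comp (mul α β).toAddMonoidHom
  have hm : m.IsAntiFlexible := haf
  simp only [hcirc, hbr]
  exact relativeAntiFlexible_anticommutator_associator_general hm
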